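/- Fix an integer d ≥ 3 and let 0 < c < (d−2)!, with p(n) = c/n^{d−1}. Then the probability that the random d-uniform hypergraph G^d(n,p(n)) is acyclic (i.e., every connected sub-hypergraph has negative excess) converges, as n → ∞, to e^{−f_d(c)} = e^{c/(2(d−2)!)}·√(1−c/(d−2)!), where f_d(c) = (1/2)·ln(1/(1−c/(d−2)!)) − c/(2·(d−2)!). -/

import Mathlib

/-!
An edge set contains a Berge cycle as soon as it is nonempty and has nonnegative excess, and the
support of a Berge cycle is connected of nonnegative excess, so a hypergraph is acyclic exactly when
it contains no Berge cycle of length `k ≥ 2` (`hyperAcyclic_iff`). With `x = c / (d - 2)!`, the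
expected number of supports of Berge cycles of length `k` is at most `x ^ k / (2 k)`, and it tends
to this value: a support carries `2 k` pairs of a base point and an orientation, and almost all
cycles are loose, that is, span `(d - 1) k` vertices. Summed over `k ≥ 2` this gives
`L = (-log (1 - x) - x) / 2 = f_d(c)`.

It remains to see that cycles are absent as if they were independent events. For the lower bound,
a Harris-type inequality (`exp_le_avoidProb`) applied to all cycles at once gives the probability
at least `exp (-L / (1 - p))`. For the upper bound, a Janson-type inequality (`avoidProb_le_exp`)
is applied to the cycles of length at most `K + 1`. Its correction term counts pairs of distinct
cycles sharing an edge; the union of such a pair has positive excess, so the correction is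
`O(1 / n)` (`exists_overlap_le`). Letting first `n` and then `K` tend to infinity gives `exp (-L)`.

Both inequalities reduce to one identity (`bexp_subset`): conditioning a random set on containing
`S` amounts to adding `S` to it.
-/

open Filter Topology FirstOrder

/-- A `d`-uniform hypergraph on vertex set `Fin n`, given by its set of `d`-element edges. -/
def HyperGraph (d n : ℕ) : Type :=
  {E : Finset (Finset (Fin n)) // ∀ e ∈ E, e.card = d}

/-- Probability weight of a given outcome in `G^d(n,p)`. -/
noncomputable def hWeight (d n : ℕ) (p : ℝ) (H : HyperGraph d n) : ℝ :=
  p ^ H.1.card * (1 - p) ^ (n.choose d - H.1.card)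

open scoped Classical in
/-- Probability of the event `A` under the random `d`-uniform hypergraph `G^d(n,p)`. -/
noncomputable def hProb (d n : ℕ) (p : ℝ) (A : HyperGraph d n → Prop) : ℝ :=
  ∑ᶠ H : HyperGraph d n, if A H then hWeight d n p H else 0

/-- The first-order language of `d`-uniform hypergraphs: a single `d`-ary relation symbol. -/
def hyperLang (d : ℕ) : FirstOrder.Language :=
  ⟨fun _ => Empty, fun k => PLift (k = d)⟩

/-- The structure on `Fin n` in the language `hyperLang d` given by a hypergraph: the
(totally symmetric, irreflexive) edge relation holds of a tuple iff its entries are distinct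
and form an edge. -/
def HyperGraph.structure {d n : ℕ} (H : HyperGraph d n) : (hyperLang d).Structure (Fin n) where
  funMap := fun f _ => f.elim
  RelMap := fun _ v => Function.Injective v ∧ Finset.univ.image v ∈ H.1

/-- Satisfaction of a FO sentence of the language of `d`-uniform hypergraphs. -/
def hSat {d n : ℕ} (H : HyperGraph d n) (φ : (hyperLang d).Sentence) : Prop :=
  @FirstOrder.Language.Sentence.Realize (hyperLang d) (Fin n) H.structure φ

/-- `L_c`: the set of limiting probabilities of FO sentences in `G^d(n, c/n^{d-1})`. -/
noncomputable def hLimFOProbs (d : ℕ) (c : ℝ) : Set ℝ :=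
  {x | ∃ φ : (hyperLang d).Sentence,
    Tendsto (fun n : ℕ => hProb d n (min 1 (c / (n : ℝ) ^ (d - 1))) (fun H => hSat H φ))
      atTop (𝓝 x)}

/-- A hypergraph is acyclic if every nonempty connected sub-hypergraph (determined by a subset
`F` of the edges, with vertex set `⋃ F`) has negative excess `(d-1)|F| - |⋃F| < 0`. -/
def hyperAcyclic {d n : ℕ} (H : HyperGraph d n) : Prop :=
  ∀ F : Finset (Finset (Fin n)), F ⊆ H.1 → F.Nonempty →
    (∀ v w : Fin n, v ∈ F.biUnion id → w ∈ F.biUnion id →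
      Relation.ReflTransGen (fun a b => ∃ e ∈ F, a ∈ e ∧ b ∈ e) v w) →
    ((d : ℤ) - 1) * F.card - (F.biUnion id).card < 0

/-! ### Random subsets and the two bounds on avoidance probabilities -/

section RandomSubset

variable {α : Type*}

/-- Expectation of `f H`, where `H` is the random subset of `U` that contains each element
independently with probability `p`. -/
noncomputable def bexp (U : Finset α) (p : ℝ) (f : Finset α → ℝ) : ℝ :=
  ∑ H ∈ U.powerset, p ^ H.card * (1 - p) ^ (U.card - H.card) * f H

lemma bexp_mono {U : Finset α} {p : ℝ} (h0 : 0 ≤ p) (h1 : p ≤ 1) {f g : Finset α → ℝ}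
    (h : ∀ H ⊆ U, f H ≤ g H) : bexp U p f ≤ bexp U p g := by
  unfold bexp
  refine Finset.sum_le_sum fun H hH => mul_le_mul_of_nonneg_left (h H (Finset.mem_powerset.1 hH)) ?_
  have : 0 ≤ 1 - p := by linarith
  positivity

lemma bexp_sub (U : Finset α) (p : ℝ) (f g : Finset α → ℝ) :
    bexp U p (fun H => f H - g H) = bexp U p f - bexp U p g := by
  simp only [bexp, ← Finset.sum_sub_distrib]
  exact Finset.sum_congr rfl fun H _ => by ring

lemma bexp_sum {ι : Type*} (s : Finset ι) (U : Finset α) (p : ℝ) (f : ι → Finset α → ℝ) :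
    bexp U p (fun H => ∑ i ∈ s, f i H) = ∑ i ∈ s, bexp U p (f i) := by
  simp only [bexp, Finset.mul_sum]
  rw [Finset.sum_comm]

variable [DecidableEq α]

lemma bexp_insert {U : Finset α} {a : α} (ha : a ∉ U) (p : ℝ) (f : Finset α → ℝ) :
    bexp (insert a U) p f = bexp U p (fun H => (1 - p) * f H + p * f (insert a H)) := by
  unfold bexp
  rw [Finset.sum_powerset_insert ha, ← Finset.sum_add_distrib]
  refine Finset.sum_congr rfl fun H hH => ?_
  have hH' := Finset.mem_powerset.1 hH
  have haH : a ∉ H := fun h => ha (hH' h)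
  have hc := Finset.card_le_card hH'
  rw [Finset.card_insert_of_notMem ha, Finset.card_insert_of_notMem haH,
    show U.card + 1 - H.card = (U.card - H.card) + 1 by omega,
    show U.card + 1 - (H.card + 1) = U.card - H.card by omega]
  ring

lemma bexp_one (U : Finset α) (p : ℝ) : bexp U p (fun _ => 1) = 1 := by
  induction U using Finset.induction_on with
  | empty => simp [bexp]
  | insert a U ha ih =>
    rw [bexp_insert ha]
    simpa using ih

lemma bexp_mem {U : Finset α} {a : α} (ha : a ∈ U) (p : ℝ) (f : Finset α → ℝ) :
    bexp U p (fun H => if a ∈ H then f H else 0) = p * bexp U p (fun H => f (insert a H)) := by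
  rw [← Finset.insert_erase ha, bexp_insert (Finset.notMem_erase a U),
    bexp_insert (Finset.notMem_erase a U)]
  unfold bexp
  rw [Finset.mul_sum]
  refine Finset.sum_congr rfl fun H hH => ?_
  have haH : a ∉ H := fun h => Finset.notMem_erase a U (Finset.mem_powerset.1 hH h)
  simp only [haH, if_false, Finset.mem_insert_self, if_true, Finset.insert_idem]
  ring

/-- Conditioning on `S ⊆ H` amounts to adding `S` to `H`. Every use of independence and every
correlation inequality below comes from this identity. -/
lemma bexp_subset {U : Finset α} (p : ℝ) {S : Finset α} (hS : S ⊆ U) (f : Finset α → ℝ) :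
    bexp U p (fun H => if S ⊆ H then f H else 0)
      = p ^ S.card * bexp U p (fun H => f (H ∪ S)) := by
  induction S using Finset.induction_on generalizing f with
  | empty => simp
  | insert a S haS ih =>
    have haU : a ∈ U := hS (Finset.mem_insert_self _ _)
    have h1 : (fun H => if insert a S ⊆ H then f H else 0)
        = fun H => if a ∈ H then (if S ⊆ H then f H else 0) else 0 := by
      funext H
      by_cases h : a ∈ H <;> simp [Finset.insert_subset_iff, h]
    have h2 : (fun H => if S ⊆ insert a H then f (insert a H) else 0)
        = fun H => if S ⊆ H then f (insert a H) else 0 := by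
      funext H
      simp only [Finset.subset_insert_iff_of_notMem haS]
    rw [h1, bexp_mem haU, h2, ih (fun x hx => hS (Finset.mem_insert_of_mem hx)),
      Finset.card_insert_of_notMem haS]
    simp only [Finset.union_insert]
    ring

open scoped Classical in
/-- Indicator of the event that `H` contains no member of the family `𝓢`. -/
noncomputable def avoidInd (𝓢 : Finset (Finset α)) (H : Finset α) : ℝ :=
  if ∀ S ∈ 𝓢, ¬ S ⊆ H then 1 else 0

/-- Probability that the random subset of `U` contains no member of the family `𝓢`. -/
noncomputable def avoidProb (U : Finset α) (p : ℝ) (𝓢 : Finset (Finset α)) : ℝ :=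
  bexp U p (avoidInd 𝓢)

lemma avoidProb_empty (U : Finset α) (p : ℝ) : avoidProb U p ∅ = 1 := by
  have h : avoidInd (∅ : Finset (Finset α)) = fun _ => 1 := by
    funext H
    simp [avoidInd]
  rw [avoidProb, h, bexp_one]

lemma avoidInd_nonneg (𝓢 : Finset (Finset α)) (H : Finset α) : 0 ≤ avoidInd 𝓢 H := by
  unfold avoidInd; split_ifs <;> norm_num

lemma avoidInd_le_one (𝓢 : Finset (Finset α)) (H : Finset α) : avoidInd 𝓢 H ≤ 1 := by
  unfold avoidInd; split_ifs <;> norm_num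

lemma avoidInd_anti {𝓢 𝓣 : Finset (Finset α)} {H K : Finset α} (h : 𝓢 ⊆ 𝓣) (hHK : H ⊆ K) :
    avoidInd 𝓣 K ≤ avoidInd 𝓢 H := by
  by_cases h1 : ∀ S ∈ 𝓣, ¬ S ⊆ K
  · have h2 : ∀ S ∈ 𝓢, ¬ S ⊆ H := fun S hS hSH => h1 S (h hS) (hSH.trans hHK)
    simp only [avoidInd, if_pos h1, if_pos h2, le_refl]
  · have : avoidInd 𝓣 K = 0 := if_neg h1
    rw [this]; exact avoidInd_nonneg _ _

lemma avoidProb_nonneg (U : Finset α) {p : ℝ} (h0 : 0 ≤ p) (h1 : p ≤ 1) (𝓢 : Finset (Finset α)) :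
    0 ≤ avoidProb U p 𝓢 := by
  have : bexp U p (fun _ => 0) ≤ avoidProb U p 𝓢 :=
    bexp_mono h0 h1 fun H _ => avoidInd_nonneg 𝓢 H
  simpa [bexp] using this

lemma avoidProb_anti (U : Finset α) {p : ℝ} (h0 : 0 ≤ p) (h1 : p ≤ 1) {𝓢 𝓣 : Finset (Finset α)}
    (h : 𝓢 ⊆ 𝓣) : avoidProb U p 𝓣 ≤ avoidProb U p 𝓢 :=
  bexp_mono h0 h1 fun _ _ => avoidInd_anti h subset_rfl

lemma avoidProb_insert {U : Finset α} (p : ℝ) {𝓢 : Finset (Finset α)} {S : Finset α}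
    (hS : S ⊆ U) : avoidProb U p (insert S 𝓢)
      = avoidProb U p 𝓢 - p ^ S.card * bexp U p (fun H => avoidInd 𝓢 (H ∪ S)) := by
  unfold avoidProb
  rw [← bexp_subset p hS, ← bexp_sub]
  congr 1
  funext H
  by_cases h : S ⊆ H <;> simp [avoidInd, h]

/-- Harris-type lower bound: the events of avoiding the members of `𝓢` are positively correlated,
so the avoidance probability is at least `∏ (1 - p ^ |S|)`, and each factor is at least
`exp (-p ^ |S| / (1 - p))`. -/
lemma exp_le_avoidProb {U : Finset α} {p : ℝ} (h0 : 0 ≤ p) (h1 : p < 1)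
    (𝓢 : Finset (Finset α)) (h𝓢 : ∀ S ∈ 𝓢, S ⊆ U ∧ S.Nonempty) :
    Real.exp (-(∑ S ∈ 𝓢, p ^ S.card) / (1 - p)) ≤ avoidProb U p 𝓢 := by
  induction 𝓢 using Finset.induction_on with
  | empty => simp [avoidProb_empty]
  | insert S 𝓢 hS ih =>
    have ih := ih fun T hT => h𝓢 T (Finset.mem_insert_of_mem hT)
    obtain ⟨hSU, hSne⟩ := h𝓢 S (Finset.mem_insert_self _ _)
    have hq : 0 < 1 - p := by linarith
    set x := p ^ S.card with hx
    have hx0 : 0 ≤ x := by positivity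
    have hxp : x ≤ p := pow_le_of_le_one h0 h1.le (Finset.card_pos.2 hSne).ne'
    have hexp : Real.exp (-x / (1 - p)) ≤ 1 - x := by
      have h3 : 1 / (1 - x) ≤ Real.exp (x / (1 - p)) := by
        have h4 : x / (1 - x) ≤ x / (1 - p) :=
          div_le_div_of_nonneg_left hx0 hq (by linarith)
        have h5 := Real.add_one_le_exp (x / (1 - p))
        have h6 : 1 / (1 - x) = x / (1 - x) + 1 := by
          have : 1 - x ≠ 0 := by linarith
          field_simp; ring
        linarith
      rw [neg_div, Real.exp_neg]
      have h7 : 0 < 1 - x := by linarith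
      rw [inv_le_comm₀ (Real.exp_pos _) h7, inv_eq_one_div]
      exact h3
    rw [Finset.sum_insert hS, avoidProb_insert p hSU,
      show -(x + ∑ S ∈ 𝓢, p ^ S.card) / (1 - p)
        = -x / (1 - p) + -(∑ S ∈ 𝓢, p ^ S.card) / (1 - p) by ring, Real.exp_add]
    have h8 : bexp U p (fun H => avoidInd 𝓢 (H ∪ S)) ≤ avoidProb U p 𝓢 :=
      bexp_mono h0 h1.le fun H _ => avoidInd_anti subset_rfl Finset.subset_union_left
    have h9 := avoidProb_nonneg U h0 h1.le 𝓢
    calc _ ≤ (1 - x) * avoidProb U p 𝓢 :=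
          mul_le_mul hexp ih (Real.exp_pos _).le (by linarith)
      _ ≤ _ := by nlinarith

/-- The conditional probability of avoiding `𝓢` given `S ⊆ H` is not much smaller than the
probability of avoiding just the members of `𝓢` disjoint from `S`. -/
lemma bexp_avoidInd_union_ge {U : Finset α} {p : ℝ} (h0 : 0 ≤ p) (h1 : p ≤ 1)
    (𝓢 : Finset (Finset α)) (h𝓢 : ∀ T ∈ 𝓢, T ⊆ U) (S : Finset α) :
    avoidProb U p (𝓢.filter fun T => Disjoint S T) *
        (1 - ∑ T ∈ 𝓢 with ¬ Disjoint S T, p ^ (T \ S).card)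
      ≤ bexp U p (fun H => avoidInd 𝓢 (H ∪ S)) := by
  set I := 𝓢.filter fun T => Disjoint S T with hI
  -- Union bound over the members of `𝓢` meeting `S`; those disjoint from `S` ignore `S`.
  have key : ∀ H, avoidInd I H - ∑ T ∈ 𝓢 with ¬ Disjoint S T,
      (if T \ S ⊆ H then avoidInd I H else 0) ≤ avoidInd 𝓢 (H ∪ S) := by
    intro H
    have hnn : ∀ T ∈ 𝓢.filter (fun T => ¬ Disjoint S T),
        0 ≤ (if T \ S ⊆ H then avoidInd I H else 0) := fun T _ => by
      split_ifs
      · exact avoidInd_nonneg _ _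
      · exact le_rfl
    by_cases hA : ∀ T ∈ 𝓢, ¬ T ⊆ H ∪ S
    · have : avoidInd 𝓢 (H ∪ S) = 1 := if_pos hA
      rw [this]
      linarith [Finset.sum_nonneg hnn, avoidInd_le_one I H]
    · have h2 : avoidInd 𝓢 (H ∪ S) = 0 := if_neg hA
      push Not at hA
      obtain ⟨T, hT, hTH⟩ := hA
      rw [h2, sub_nonpos]
      have hsd : T \ S ⊆ H := by
        intro x hx
        rw [Finset.mem_sdiff] at hx
        exact (Finset.mem_union.1 (hTH hx.1)).resolve_right hx.2
      by_cases hd : Disjoint S T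
      · have h3 : avoidInd I H = 0 := by
          refine if_neg ?_
          push Not
          refine ⟨T, Finset.mem_filter.2 ⟨hT, hd⟩, ?_⟩
          rwa [Finset.sdiff_eq_self_of_disjoint hd.symm] at hsd
        rw [h3] at hnn ⊢
        exact Finset.sum_nonneg hnn
      · have := Finset.single_le_sum hnn (Finset.mem_filter.2 ⟨hT, hd⟩)
        rwa [if_pos hsd] at this
  refine le_trans ?_ (bexp_mono h0 h1 fun H _ => key H)
  rw [bexp_sub, bexp_sum, mul_sub, mul_one, Finset.mul_sum]
  refine sub_le_sub le_rfl (Finset.sum_le_sum fun T hT => ?_)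
  rw [bexp_subset p (Finset.sdiff_subset.trans (h𝓢 T (Finset.mem_filter.1 hT).1)), mul_comm]
  exact mul_le_mul_of_nonneg_right
    (bexp_mono h0 h1 fun H _ => avoidInd_anti subset_rfl Finset.subset_union_left) (by positivity)

/-- Janson-type upper bound: avoidance is almost as unlikely as for independent events, up to the
expected number of pairs of distinct overlapping members of `𝓢` that occur together. -/
lemma avoidProb_le_exp {U : Finset α} {p : ℝ} (h0 : 0 ≤ p) (h1 : p ≤ 1)
    (𝓢 : Finset (Finset α)) (h𝓢 : ∀ S ∈ 𝓢, S ⊆ U) :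
    avoidProb U p 𝓢 ≤ Real.exp (-(∑ S ∈ 𝓢, p ^ S.card) +
      ∑ S ∈ 𝓢, ∑ T ∈ 𝓢 with T ≠ S ∧ ¬ Disjoint S T, p ^ (S ∪ T).card) := by
  induction 𝓢 using Finset.induction_on with
  | empty => simp [avoidProb_empty]
  | insert S 𝓢 hS ih =>
    have ih := ih fun T hT => h𝓢 T (Finset.mem_insert_of_mem hT)
    have hSU := h𝓢 S (Finset.mem_insert_self _ _)
    have hsub := bexp_avoidInd_union_ge h0 h1 𝓢
      (fun T hT => h𝓢 T (Finset.mem_insert_of_mem hT)) S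
    set a := avoidProb U p (𝓢.filter fun T => Disjoint S T) with ha
    set s := ∑ T ∈ 𝓢 with ¬ Disjoint S T, p ^ (T \ S).card with hs
    set y := ∑ T ∈ 𝓢 with ¬ Disjoint S T, p ^ (S ∪ T).card with hy
    have hsy : p ^ S.card * s = y := by
      rw [hs, hy, Finset.mul_sum]
      refine Finset.sum_congr rfl fun T _ => ?_
      rw [← pow_add, ← Finset.union_sdiff_self_eq_union,
        Finset.card_union_of_disjoint Finset.disjoint_sdiff]
    have hA : avoidProb U p 𝓢 ≤ a := avoidProb_anti U h0 h1 (Finset.filter_subset _ _)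
    have hA0 := avoidProb_nonneg U h0 h1 𝓢
    have hstep : avoidProb U p (insert S 𝓢)
        ≤ avoidProb U p 𝓢 * Real.exp (-(p ^ S.card) + y) := by
      have h3 : avoidProb U p (insert S 𝓢) ≤ avoidProb U p 𝓢 - a * (p ^ S.card - y) := by
        rw [avoidProb_insert p hSU, ← hsy]
        have := mul_le_mul_of_nonneg_left hsub (show 0 ≤ p ^ S.card by positivity)
        nlinarith
      rcases le_total 0 (p ^ S.card - y) with hx | hx
      · have h4 := Real.add_one_le_exp (-(p ^ S.card) + y)
        nlinarith [mul_le_mul_of_nonneg_right hA hx, mul_le_mul_of_nonneg_left h4 hA0]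
      · have h4 : (1 : ℝ) ≤ Real.exp (-(p ^ S.card) + y) := Real.one_le_exp (by linarith)
        have h5 := avoidProb_anti U h0 h1 (Finset.subset_insert S 𝓢)
        nlinarith
    have hsum : y + ∑ S ∈ 𝓢, ∑ T ∈ 𝓢 with T ≠ S ∧ ¬ Disjoint S T, p ^ (S ∪ T).card
        ≤ ∑ S' ∈ insert S 𝓢, ∑ T ∈ insert S 𝓢 with T ≠ S' ∧ ¬ Disjoint S' T,
            p ^ (S' ∪ T).card := by
      rw [Finset.sum_insert hS]
      refine add_le_add ?_ (Finset.sum_le_sum fun S' _ => ?_)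
      · refine Finset.sum_le_sum_of_subset_of_nonneg ?_ fun T _ _ => by positivity
        intro T hT
        rw [Finset.mem_filter] at hT ⊢
        exact ⟨Finset.mem_insert_of_mem hT.1, fun h => hS (h ▸ hT.1), hT.2⟩
      · refine Finset.sum_le_sum_of_subset_of_nonneg ?_ fun T _ _ => by positivity
        exact Finset.filter_subset_filter _ (Finset.subset_insert _ _)
    refine hstep.trans ?_
    calc _ ≤ Real.exp (-(∑ S ∈ 𝓢, p ^ S.card) +
              ∑ S ∈ 𝓢, ∑ T ∈ 𝓢 with T ≠ S ∧ ¬ Disjoint S T, p ^ (S ∪ T).card)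
            * Real.exp (-(p ^ S.card) + y) :=
          mul_le_mul_of_nonneg_right ih (Real.exp_pos _).le
      _ ≤ _ := by
        rw [← Real.exp_add, Finset.sum_insert hS]
        refine Real.exp_le_exp.2 ?_
        linarith

end RandomSubset

/-! ### Berge cycles and acyclicity -/

/-- A Berge cycle of length `m + 2` in an `(r + 2)`-uniform hypergraph: distinct vertices `v i`
and distinct edges `e i`, cyclically indexed, with `v i` and `v (i + 1)` both in `e i`. Writing the
length as `m + 2` builds in that cycles have length at least two. -/
structure IsBergeCycle (r : ℕ) {n m : ℕ} (v : ZMod (m + 2) → Fin n)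
    (e : ZMod (m + 2) → Finset (Fin n)) : Prop where
  v_inj : Function.Injective v
  e_inj : Function.Injective e
  card_e : ∀ i, (e i).card = r + 2
  mem : ∀ i, v i ∈ e i
  mem_succ : ∀ i, v (i + 1) ∈ e i

lemma zmod_add_one_ne {m : ℕ} (i : ZMod (m + 2)) : i + 1 ≠ i := by
  have : Fact (1 < m + 2) := ⟨by omega⟩
  simp

/-- Induction along the cyclic order, starting anywhere. -/
lemma zmod_induction {m : ℕ} {P : ZMod (m + 2) → Prop} (i₀ : ZMod (m + 2)) (h0 : P i₀)
    (hs : ∀ i, P i → P (i + 1)) (i : ZMod (m + 2)) : P i := by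
  have h : ∀ t : ℕ, P (i₀ + t) := by
    intro t
    induction t with
    | zero => simpa using h0
    | succ t ih =>
      have := hs _ ih
      rwa [add_assoc, ← Nat.cast_succ] at this
  have h2 := h (i - i₀).val
  rwa [ZMod.natCast_zmod_val, add_sub_cancel] at h2

namespace IsBergeCycle

variable {r n m : ℕ} {v : ZMod (m + 2) → Fin n} {e : ZMod (m + 2) → Finset (Fin n)}

lemma v_ne (h : IsBergeCycle r v e) (i : ZMod (m + 2)) : v (i + 1) ≠ v i :=
  fun hh => zmod_add_one_ne i (h.v_inj hh)

lemma card_support (h : IsBergeCycle r v e) : (Finset.univ.image e).card = m + 2 := by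
  rw [Finset.card_image_of_injective _ h.e_inj, Finset.card_univ, ZMod.card]

lemma card_verts_le (h : IsBergeCycle r v e) :
    ((Finset.univ.image e).biUnion id).card ≤ (r + 1) * (m + 2) := by
  have hsub : (Finset.univ.image e).biUnion id
      ⊆ Finset.univ.biUnion fun i => (e i).erase (v i) := by
    intro x hx
    simp only [Finset.mem_biUnion, Finset.mem_image, Finset.mem_univ, true_and, id] at hx ⊢
    obtain ⟨_, ⟨i, rfl⟩, hx⟩ := hx
    by_cases hxi : x = v i
    · -- `v i` is charged to the preceding edge.
      refine ⟨i - 1, Finset.mem_erase.2 ⟨?_, ?_⟩⟩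
      · have := h.v_ne (i - 1)
        rwa [sub_add_cancel, ← hxi] at this
      · have := h.mem_succ (i - 1)
        rwa [sub_add_cancel, ← hxi] at this
    · exact ⟨i, Finset.mem_erase.2 ⟨hxi, hx⟩⟩
  refine (Finset.card_le_card hsub).trans (Finset.card_biUnion_le.trans ?_)
  have : ∀ i ∈ (Finset.univ : Finset (ZMod (m + 2))), ((e i).erase (v i)).card = r + 1 :=
    fun i _ => by rw [Finset.card_erase_of_mem (h.mem i), h.card_e]; rfl
  rw [Finset.sum_congr rfl this, Finset.sum_const, Finset.card_univ, ZMod.card, smul_eq_mul,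
    mul_comm]

/-- Attaching a cycle that lies partly in `S` and partly outside `S` to `S` raises the excess:
each new edge brings at most `r + 1` new vertices, and the last new edge before the cycle returns
to `S` brings at most `r`. -/
lemma card_verts_union_lt (h : IsBergeCycle r v e) {S : Finset (Finset (Fin n))}
    {i₀ i₁ : ZMod (m + 2)} (h0 : e i₀ ∈ S) (h1 : e i₁ ∉ S) :
    ((S ∪ Finset.univ.image e).biUnion id).card + 1
      ≤ (S.biUnion id).card + (r + 1) * (Finset.univ.image e \ S).card := by
  obtain ⟨j, hj, hj'⟩ : ∃ j, e j ∉ S ∧ e (j + 1) ∈ S := by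
    by_contra! hcon
    exact zmod_induction (P := fun i => e i ∉ S) i₁ h1 hcon i₀ h0
  set I := Finset.univ.filter fun i => e i ∉ S with hI
  have hcard : (Finset.univ.image e \ S).card = I.card := by
    rw [← Finset.card_image_of_injective I h.e_inj]
    congr 1
    ext s
    simp only [Finset.mem_sdiff, Finset.mem_image, Finset.mem_univ, true_and, hI,
      Finset.mem_filter]
    constructor
    · rintro ⟨⟨i, rfl⟩, hs⟩; exact ⟨i, hs, rfl⟩
    · rintro ⟨i, hs, rfl⟩; exact ⟨⟨i, rfl⟩, hs⟩
  set A : ZMod (m + 2) → Finset (Fin n) := fun i =>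
    if e (i + 1) ∈ S then ((e i).erase (v i)).erase (v (i + 1)) else (e i).erase (v i) with hA
  have hsub : (S ∪ Finset.univ.image e).biUnion id ⊆ S.biUnion id ∪ I.biUnion A := by
    intro x hx
    simp only [Finset.mem_biUnion, Finset.mem_union, Finset.mem_image, Finset.mem_univ, true_and,
      id] at hx ⊢
    obtain ⟨s, hs, hx⟩ := hx
    by_cases hsS : s ∈ S
    · exact Or.inl ⟨s, hsS, hx⟩
    obtain ⟨i, rfl⟩ := hs.resolve_left hsS
    by_cases hxi : x = v i
    · have hm := h.mem_succ (i - 1)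
      have hne := h.v_ne (i - 1)
      rw [sub_add_cancel, ← hxi] at hm hne
      by_cases hp : e (i - 1) ∈ S
      · exact Or.inl ⟨_, hp, hm⟩
      · refine Or.inr ⟨i - 1, by simp [hI, hp], ?_⟩
        simp only [hA, sub_add_cancel, if_neg hsS]
        exact Finset.mem_erase.2 ⟨hne, hm⟩
    · by_cases hp : e (i + 1) ∈ S
      · by_cases hxs : x = v (i + 1)
        · exact Or.inl ⟨_, hp, hxs ▸ h.mem (i + 1)⟩
        · refine Or.inr ⟨i, by simp [hI, hsS], ?_⟩
          simp only [hA, if_pos hp]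
          exact Finset.mem_erase.2 ⟨hxs, Finset.mem_erase.2 ⟨hxi, hx⟩⟩
      · refine Or.inr ⟨i, by simp [hI, hsS], ?_⟩
        simp only [hA, if_neg hp]
        exact Finset.mem_erase.2 ⟨hxi, hx⟩
  have hAle : ∀ i, (A i).card ≤ r + 1 := by
    intro i
    have h3 : ((e i).erase (v i)).card = r + 1 := by
      rw [Finset.card_erase_of_mem (h.mem i), h.card_e]; rfl
    simp only [hA]
    split_ifs
    · exact (Finset.card_erase_le).trans h3.le
    · exact h3.le
  have hAj : (A j).card < r + 1 := by
    simp only [hA, if_pos hj']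
    rw [Finset.card_erase_of_mem (Finset.mem_erase.2 ⟨h.v_ne j, h.mem_succ j⟩),
      Finset.card_erase_of_mem (h.mem j), h.card_e]
    omega
  have hsum : ∑ i ∈ I, (A i).card < ∑ i ∈ I, (r + 1) :=
    Finset.sum_lt_sum (fun i _ => hAle i) ⟨j, by simp [hI, hj], hAj⟩
  rw [Finset.sum_const, smul_eq_mul] at hsum
  have h4 := Finset.card_le_card hsub
  have h5 := Finset.card_union_le (S.biUnion id) (I.biUnion A)
  have h6 : (I.biUnion A).card ≤ ∑ i ∈ I, (A i).card := Finset.card_biUnion_le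
  rw [hcard, mul_comm (r + 1)]
  omega

lemma connected (h : IsBergeCycle r v e) (x y : Fin n)
    (hx : x ∈ (Finset.univ.image e).biUnion id) (hy : y ∈ (Finset.univ.image e).biUnion id) :
    Relation.ReflTransGen (fun a b => ∃ s ∈ Finset.univ.image e, a ∈ s ∧ b ∈ s) x y := by
  simp only [Finset.mem_biUnion, Finset.mem_image, Finset.mem_univ, true_and, id] at hx hy
  obtain ⟨_, ⟨i, rfl⟩, hx⟩ := hx
  obtain ⟨_, ⟨j, rfl⟩, hy⟩ := hy
  have hstep : ∀ (i : ZMod (m + 2)) {a b : Fin n}, a ∈ e i → b ∈ e i →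
      Relation.ReflTransGen (fun a b => ∃ s ∈ Finset.univ.image e, a ∈ s ∧ b ∈ s) a b :=
    fun i a b ha hb => Relation.ReflTransGen.single
      ⟨e i, Finset.mem_image_of_mem _ (Finset.mem_univ _), ha, hb⟩
  refine (hstep i hx (h.mem i)).trans (Relation.ReflTransGen.trans ?_ (hstep j (h.mem j) hy))
  exact zmod_induction (P := fun j => Relation.ReflTransGen _ (v i) (v j)) i .refl
    (fun j hj => hj.trans (hstep j (h.mem j) (h.mem_succ j))) j

end IsBergeCycle

/-- A non-backtracking infinite walk through finitely many edges closes up to a Berge cycle: take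
the shortest segment `V s, E s, …, E (s + l + 1)` whose last edge contains its first vertex. -/
lemma exists_bergeCycle_of_walk {r n : ℕ} {F : Finset (Finset (Fin n))}
    (hF : ∀ s ∈ F, s.card = r + 2) (V : ℕ → Fin n) (E : ℕ → Finset (Fin n))
    (hEF : ∀ i, E i ∈ F) (hVE : ∀ i, V i ∈ E i) (hVE' : ∀ i, V (i + 1) ∈ E i)
    (hV : ∀ i, V (i + 1) ≠ V i) (hE : ∀ i, E (i + 1) ≠ E i) :
    ∃ (m : ℕ) (v : ZMod (m + 2) → Fin n) (e : ZMod (m + 2) → Finset (Fin n)),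
      IsBergeCycle r v e ∧ ∀ i, e i ∈ F := by
  classical
  have hEgap : ∀ {a b : ℕ}, a < b → E a = E b → ∃ l, b = a + l + 2 := by
    intro a b hab he
    refine ⟨b - a - 2, ?_⟩
    have : b ≠ a + 1 := fun hb => hE a (by rw [← hb, he])
    omega
  have hVgap : ∀ {a b : ℕ}, a < b → V a = V b → ∃ l, b = a + l + 2 := by
    intro a b hab he
    refine ⟨b - a - 2, ?_⟩
    have : b ≠ a + 1 := fun hb => hV a (by rw [← hb, he])
    omega
  have hex : ∃ l s, V s ∈ E (s + l + 1) := by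
    obtain ⟨a, b, hab, he⟩ := Finite.exists_ne_map_eq_of_infinite E
    wlog hlt : a < b generalizing a b
    · exact this b a hab.symm he.symm (by omega)
    obtain ⟨l, rfl⟩ := hEgap hlt he
    refine ⟨l, a + 1, ?_⟩
    rw [show a + 1 + l + 1 = a + l + 2 by ring, ← he]
    exact hVE' a
  obtain ⟨s, hs⟩ := Nat.find_spec hex
  have hmin : ∀ l < Nat.find hex, ∀ s, V s ∉ E (s + l + 1) := fun l hl s hc =>
    Nat.find_min hex hl ⟨s, hc⟩
  set m := Nat.find hex
  have hVinj : ∀ a b, a < b → b < m + 2 → V (s + a) ≠ V (s + b) := by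
    intro a b hab hb he
    obtain ⟨l, hl⟩ := hVgap (Nat.add_lt_add_left hab s) he
    refine hmin l (by omega) (s + a) ?_
    have := hVE' (s + a + l + 1)
    rwa [show s + a + l + 1 + 1 = s + b by omega, ← he] at this
  have hEinj : ∀ a b, a < b → b < m + 2 → E (s + a) ≠ E (s + b) := by
    intro a b hab hb he
    obtain ⟨l, hl⟩ := hEgap (Nat.add_lt_add_left hab s) he
    refine hmin l (by omega) (s + a + 1) ?_
    rw [show s + a + 1 + l + 1 = s + b by omega, ← he]
    exact hVE' (s + a)
  refine ⟨m, fun i => V (s + i.val), fun i => E (s + i.val), ⟨?_, ?_, ?_, ?_, ?_⟩, fun i => hEF _⟩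
  · intro i j hij
    rcases lt_trichotomy i.val j.val with hlt | heq | hlt
    · exact absurd hij (hVinj _ _ hlt (ZMod.val_lt j))
    · exact ZMod.val_injective _ heq
    · exact absurd hij.symm (hVinj _ _ hlt (ZMod.val_lt i))
  · intro i j hij
    rcases lt_trichotomy i.val j.val with hlt | heq | hlt
    · exact absurd hij (hEinj _ _ hlt (ZMod.val_lt j))
    · exact ZMod.val_injective _ heq
    · exact absurd hij.symm (hEinj _ _ hlt (ZMod.val_lt i))
  · exact fun i => hF _ (hEF _)
  · exact fun i => hVE _
  · intro i
    have hval : (i + 1).val = (i.val + 1) % (m + 2) := by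
      rw [← ZMod.val_natCast]
      simp
    have hlt := ZMod.val_lt i
    change V (s + (i + 1).val) ∈ E (s + i.val)
    rw [hval]
    rcases Nat.lt_or_ge (i.val + 1) (m + 2) with hc | hc
    · rw [Nat.mod_eq_of_lt hc]
      exact hVE' _
    · rw [show i.val + 1 = m + 2 by omega, Nat.mod_self, show i.val = m + 1 by omega]
      exact hs

/-- A nonempty edge set of nonnegative excess contains a Berge cycle. In a minimal such set every
edge shares at least two of its vertices with other edges, so non-backtracking walks never get
stuck. -/
lemma exists_bergeCycle_of_excess {r n : ℕ} (F : Finset (Finset (Fin n)))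
    (hF : ∀ s ∈ F, s.card = r + 2) (hne : F.Nonempty)
    (hex : (F.biUnion id).card ≤ (r + 1) * F.card) :
    ∃ (m : ℕ) (v : ZMod (m + 2) → Fin n) (e : ZMod (m + 2) → Finset (Fin n)),
      IsBergeCycle r v e ∧ ∀ i, e i ∈ F := by
  induction F using Finset.strongInduction with
  | H F ih =>
    by_cases hmin : ∃ s ∈ F, (F.erase s).Nonempty ∧
        ((F.erase s).biUnion id).card ≤ (r + 1) * (F.erase s).card
    · obtain ⟨s, hs, hne', hex'⟩ := hmin
      obtain ⟨m, v, e, h1, h2⟩ := ih _ (Finset.erase_ssubset hs)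
        (fun t ht => hF t (Finset.mem_of_mem_erase ht)) hne' hex'
      exact ⟨m, v, e, h1, fun i => Finset.mem_of_mem_erase (h2 i)⟩
    push Not at hmin
    have hshared : ∀ s ∈ F, 1 < (s ∩ (F.erase s).biUnion id).card := by
      intro s hs
      have hins : F.biUnion id = (F.erase s).biUnion id ∪ s := by
        conv_lhs => rw [← Finset.insert_erase hs]
        rw [Finset.biUnion_insert, Finset.union_comm]; rfl
      have h1 := Finset.card_union_add_card_inter ((F.erase s).biUnion id) s
      rw [← hins, hF s hs, Finset.inter_comm] at h1
      have h2 := Finset.card_erase_add_one hs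
      rcases (F.erase s).eq_empty_or_nonempty with h0 | h0
      · rw [h0] at h1 h2
        simp only [Finset.card_empty, zero_add, Finset.biUnion_empty, Finset.inter_empty] at h1 h2
        rw [← h2] at hex
        omega
      · have h3 := hmin s hs h0
        rw [← h2] at hex
        rw [Nat.mul_add] at hex
        omega
    have hstep : ∀ x : Fin n × F, ∃ y : Fin n × F,
        y.1 ∈ x.2.1 ∧ y.1 ≠ x.1 ∧ y.1 ∈ y.2.1 ∧ y.2.1 ≠ x.2.1 := by
      rintro ⟨a, s, hs⟩
      obtain ⟨b, hb, hba⟩ := Finset.exists_mem_ne (hshared s hs) a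
      rw [Finset.mem_inter, Finset.mem_biUnion] at hb
      obtain ⟨hbs, t, ht, hbt⟩ := hb
      rw [Finset.mem_erase] at ht
      exact ⟨⟨b, t, ht.2⟩, hbs, hba, hbt, ht.1⟩
    choose nxt hn1 hn2 hn3 hn4 using hstep
    obtain ⟨s, hs⟩ := hne
    obtain ⟨a, ha⟩ : s.Nonempty := Finset.card_pos.1 (by rw [hF s hs]; omega)
    set q : ℕ → Fin n × F := fun i => nxt^[i] ⟨a, s, hs⟩ with hq
    have hqs : ∀ i, q (i + 1) = nxt (q i) := fun i => Function.iterate_succ_apply' _ _ _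
    refine exists_bergeCycle_of_walk hF (fun i => (q i).1) (fun i => (q i).2.1)
      (fun i => (q i).2.2) ?_ ?_ ?_ ?_
    · intro i
      cases i with
      | zero => exact ha
      | succ i => simp only [hqs]; exact hn3 _
    · intro i; simp only [hqs]; exact hn1 _
    · intro i; simp only [hqs]; exact hn2 _
    · intro i; simp only [hqs]; exact hn4 _

/-- Acyclicity, defined through excess, means containing no Berge cycle. -/
lemma hyperAcyclic_iff {r n : ℕ} (H : HyperGraph (r + 2) n) :
    hyperAcyclic H ↔ ∀ (m : ℕ) (v : ZMod (m + 2) → Fin n) (e : ZMod (m + 2) → Finset (Fin n)),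
      IsBergeCycle r v e → ¬ Finset.univ.image e ⊆ H.1 := by
  constructor
  · intro h m v e hc hsub
    have h1 := h _ hsub (Finset.univ_nonempty.image e) hc.connected
    have h2 := hc.card_verts_le
    rw [hc.card_support] at h1
    zify at h2
    push_cast at h1
    nlinarith
  · intro h F hFH hne _
    by_contra hcon
    have hex : (F.biUnion id).card ≤ (r + 1) * F.card := by
      zify
      push_cast at hcon
      linarith
    obtain ⟨m, v, e, hc, he⟩ :=
      exists_bergeCycle_of_excess F (fun s hs => H.2 s (hFH hs)) hne hex
    refine h m v e hc fun s hs => ?_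
    obtain ⟨i, _, rfl⟩ := Finset.mem_image.1 hs
    exact hFH (he i)

/-! ### Counting supports of Berge cycles -/

open scoped Classical in
/-- The Berge cycles of length `m + 2`, with a base point and an orientation. -/
noncomputable def cycleSeqs (r n m : ℕ) :
    Finset ((ZMod (m + 2) → Fin n) × (ZMod (m + 2) → Finset (Fin n))) :=
  Finset.univ.filter fun q => IsBergeCycle r q.1 q.2

/-- The edge sets of Berge cycles of length `m + 2`. -/
noncomputable def cycleSupports (r n m : ℕ) : Finset (Finset (Finset (Fin n))) :=
  (cycleSeqs r n m).image fun q => Finset.univ.image q.2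

lemma mem_cycleSeqs {r n m : ℕ}
    {q : (ZMod (m + 2) → Fin n) × (ZMod (m + 2) → Finset (Fin n))} :
    q ∈ cycleSeqs r n m ↔ IsBergeCycle r q.1 q.2 := by
  simp [cycleSeqs]

lemma mem_cycleSupports {r n m : ℕ} {S : Finset (Finset (Fin n))} :
    S ∈ cycleSupports r n m ↔ ∃ (v : ZMod (m + 2) → Fin n) (e : ZMod (m + 2) → Finset (Fin n)),
      IsBergeCycle r v e ∧ Finset.univ.image e = S := by
  simp only [cycleSupports, Finset.mem_image, mem_cycleSeqs, Prod.exists]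

/-- Each support is traced by at least `2 (m + 2)` cycles: its rotations and reflections. -/
lemma mul_card_cycleSupports_le (r n m : ℕ) :
    2 * (m + 2) * (cycleSupports r n m).card ≤ (cycleSeqs r n m).card := by
  refine Finset.mul_card_image_le_card _ _ fun S hS => ?_
  obtain ⟨⟨v, e⟩, hq, rfl⟩ := Finset.mem_image.1 hS
  have h : IsBergeCycle r v e := mem_cycleSeqs.1 hq
  set φ : ZMod (m + 2) × Bool → (ZMod (m + 2) → Fin n) × (ZMod (m + 2) → Finset (Fin n)) :=
    fun p => if p.2 then (fun i => v (p.1 - i), fun i => e (p.1 - i - 1))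
      else (fun i => v (i + p.1), fun i => e (i + p.1)) with hφ
  have hinj : Function.Injective φ := by
    rintro ⟨s, b⟩ ⟨s', b'⟩ hss
    have hv := congr_fun (congrArg Prod.fst hss) 0
    have he := congr_fun (congrArg Prod.snd hss) 0
    cases b <;> cases b' <;> simp only [hφ, if_true, if_false, zero_add, sub_zero,
      Bool.false_eq_true] at hv he
    · rw [h.v_inj hv]
    · have h1 := h.v_inj hv
      have h2 := h.e_inj he
      rw [h1] at h2
      exact absurd (by rw [sub_add_cancel]; exact h2) (zmod_add_one_ne (s' - 1))
    · have h1 := h.v_inj hv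
      have h2 := h.e_inj he
      rw [← h1] at h2
      exact absurd (by rw [sub_add_cancel]; exact h2.symm) (zmod_add_one_ne (s - 1))
    · rw [h.v_inj hv]
  have hcard : (Finset.univ.image φ).card = 2 * (m + 2) := by
    rw [Finset.card_image_of_injective _ hinj, Finset.card_univ, Fintype.card_prod, ZMod.card,
      Fintype.card_bool, mul_comm]
  rw [← hcard]
  refine Finset.card_le_card fun q hq' => ?_
  obtain ⟨⟨s, b⟩, _, rfl⟩ := Finset.mem_image.1 hq'
  rw [Finset.mem_filter, mem_cycleSeqs]
  cases b
  · simp only [hφ, if_false, Bool.false_eq_true]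
    refine ⟨⟨fun i j hij => ?_, fun i j hij => ?_, fun i => h.card_e _, fun i => h.mem _,
      fun i => ?_⟩, ?_⟩
    · exact add_right_cancel (h.v_inj hij)
    · exact add_right_cancel (h.e_inj hij)
    · have := h.mem_succ (i + s)
      change v (i + 1 + s) ∈ e (i + s)
      rwa [show i + 1 + s = i + s + 1 by ring]
    · ext t
      simp only [Finset.mem_image, Finset.mem_univ, true_and]
      exact ⟨fun ⟨i, hi⟩ => ⟨i + s, hi⟩, fun ⟨i, hi⟩ => ⟨i - s, by rw [sub_add_cancel]; exact hi⟩⟩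
  · simp only [hφ, if_true]
    refine ⟨⟨fun i j hij => ?_, fun i j hij => ?_, fun i => h.card_e _, fun i => ?_,
      fun i => ?_⟩, ?_⟩
    · exact sub_right_injective (h.v_inj hij)
    · exact sub_right_injective (sub_left_injective (h.e_inj hij))
    · have := h.mem_succ (s - i - 1)
      change v (s - i) ∈ e (s - i - 1)
      rwa [sub_add_cancel] at this
    · have := h.mem (s - i - 1)
      change v (s - (i + 1)) ∈ e (s - i - 1)
      rwa [show s - (i + 1) = s - i - 1 by ring]
    · ext t
      simp only [Finset.mem_image, Finset.mem_univ, true_and]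
      exact ⟨fun ⟨i, hi⟩ => ⟨s - i - 1, hi⟩, fun ⟨i, hi⟩ =>
        ⟨s - 1 - i, by rw [show s - (s - 1 - i) - 1 = i by ring]; exact hi⟩⟩

lemma card_cycleSeqs_le (r n m : ℕ) :
    (cycleSeqs r n m).card ≤ (n * n.choose r) ^ (m + 2) := by
  set ψ : (ZMod (m + 2) → Fin n) × (ZMod (m + 2) → Finset (Fin n)) →
      (ZMod (m + 2) → Fin n) × (ZMod (m + 2) → Finset (Fin n)) :=
    fun q => (q.1, fun i => ((q.2 i).erase (q.1 i)).erase (q.1 (i + 1))) with hψ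
  have hcard : ((Finset.univ : Finset (ZMod (m + 2) → Fin n)) ×ˢ
      Fintype.piFinset fun _ : ZMod (m + 2) =>
        Finset.powersetCard r (Finset.univ : Finset (Fin n))).card
      = (n * n.choose r) ^ (m + 2) := by
    rw [Finset.card_product, Finset.card_univ, Fintype.card_fun, Fintype.card_piFinset,
      Finset.prod_const, Finset.card_powersetCard, Finset.card_univ, Finset.card_univ, ZMod.card,
      Fintype.card_fin, mul_pow]
  rw [← hcard]
  refine Finset.card_le_card_of_injOn ψ ?_ ?_
  · intro q hq
    have h := mem_cycleSeqs.1 hq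
    simp only [hψ, Finset.coe_product, Set.mem_prod, Finset.mem_coe, Finset.mem_univ, true_and,
      Fintype.mem_piFinset, Finset.mem_powersetCard, Finset.subset_univ]
    intro i
    rw [Finset.card_erase_of_mem (Finset.mem_erase.2 ⟨h.v_ne i, h.mem_succ i⟩),
      Finset.card_erase_of_mem (h.mem i), h.card_e]
    rfl
  · intro q hq q' hq' hqq
    have h := mem_cycleSeqs.1 hq
    have h' := mem_cycleSeqs.1 hq'
    have h1 : q.1 = q'.1 := (congrArg Prod.fst hqq :)
    refine Prod.ext h1 (funext fun i => ?_)
    have h2 : ((q.2 i).erase (q.1 i)).erase (q.1 (i + 1))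
        = ((q'.2 i).erase (q'.1 i)).erase (q'.1 (i + 1)) :=
      congr_fun (congrArg Prod.snd hqq :) i
    rw [← Finset.insert_erase (h.mem i), ← Finset.insert_erase (h'.mem i),
      ← Finset.insert_erase (Finset.mem_erase.2 ⟨h.v_ne i, h.mem_succ i⟩),
      ← Finset.insert_erase (Finset.mem_erase.2 ⟨h'.v_ne i, h'.mem_succ i⟩), h2, h1]

/-- Labels of the vertices of a loose cycle of length `m + 2`: the `m + 2` cycle vertices and, for
each edge, its `r` private vertices. -/
abbrev LooseLabel (r m : ℕ) : Type := ZMod (m + 2) ⊕ ZMod (m + 2) × Fin r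

/-- The Berge cycle of a labelling, as its vertex sequence and its edge sequence. -/
def looseCycle {r n m : ℕ} (g : LooseLabel r m ↪ Fin n) :
    (ZMod (m + 2) → Fin n) × (ZMod (m + 2) → Finset (Fin n)) :=
  (fun i => g (.inl i), fun i => insert (g (.inl i)) (insert (g (.inl (i + 1)))
    (Finset.univ.image fun t => g (.inr (i, t)))))

section Loose

variable {r n m : ℕ} (g : LooseLabel r m ↪ Fin n)

lemma mem_looseCycle {i : ZMod (m + 2)} {x : Fin n} : x ∈ (looseCycle g).2 i ↔
    x = (looseCycle g).1 i ∨ x = (looseCycle g).1 (i + 1) ∨ ∃ t, g (.inr (i, t)) = x := by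
  simp [looseCycle]

lemma looseCycle_fst (i : ZMod (m + 2)) : (looseCycle g).1 i = g (.inl i) := rfl

/-- Distinct edges of a loose cycle meet only in cycle vertices. -/
lemma looseCycle_inter {i j : ZMod (m + 2)} (hij : i ≠ j) {x : Fin n}
    (hi : x ∈ (looseCycle g).2 i) (hj : x ∈ (looseCycle g).2 j) :
    x = (looseCycle g).1 i ∨ x = (looseCycle g).1 (i + 1) := by
  rcases (mem_looseCycle g).1 hi with h | h | ⟨t, rfl⟩
  · exact Or.inl h
  · exact Or.inr h
  · rcases (mem_looseCycle g).1 hj with h | h | ⟨t', h⟩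
    · exact absurd (g.injective h) (by simp)
    · exact absurd (g.injective h) (by simp)
    · have := g.injective h
      simp only [Sum.inr.injEq, Prod.mk.injEq] at this
      exact absurd this.1.symm hij

lemma image_looseCycle_private (i : ZMod (m + 2)) :
    (Finset.univ.image fun t => g (.inr (i, t)))
      = (((looseCycle g).2 i).erase ((looseCycle g).1 i)).erase ((looseCycle g).1 (i + 1)) := by
  ext x
  simp only [Finset.mem_erase, mem_looseCycle, Finset.mem_image, Finset.mem_univ, true_and,
    looseCycle_fst]
  constructor
  · rintro ⟨t, rfl⟩
    exact ⟨fun h => by simpa using g.injective h, fun h => by simpa using g.injective h,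
      Or.inr (Or.inr ⟨t, rfl⟩)⟩
  · rintro ⟨h1, h2, h | h | h⟩
    · exact absurd h h2
    · exact absurd h h1
    · exact h

lemma card_looseCycle_private (i : ZMod (m + 2)) :
    (Finset.univ.image fun t => g (.inr (i, t))).card = r := by
  rw [Finset.card_image_of_injective, Finset.card_univ, Fintype.card_fin]
  intro t t' h
  simpa using g.injective h

lemma isBergeCycle_looseCycle (hr : 1 ≤ r) :
    IsBergeCycle r (looseCycle g).1 (looseCycle g).2 := by
  refine ⟨fun i j h => by simpa using g.injective h, fun i j h => ?_, fun i => ?_,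
    fun i => (mem_looseCycle g).2 (Or.inl rfl),
    fun i => (mem_looseCycle g).2 (Or.inr (Or.inl rfl))⟩
  · by_contra hij
    have hx : g (.inr (i, ⟨0, hr⟩)) ∈ (looseCycle g).2 i :=
      (mem_looseCycle g).2 (Or.inr (Or.inr ⟨_, rfl⟩))
    rcases looseCycle_inter g hij hx (h ▸ hx) with h1 | h1 <;>
      exact absurd (g.injective h1) (by simp)
  · change (insert (g (.inl i)) (insert (g (.inl (i + 1)))
      (Finset.univ.image fun t => g (.inr (i, t))))).card = r + 2
    rw [Finset.card_insert_of_notMem, Finset.card_insert_of_notMem, card_looseCycle_private]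
    · simp
    · simp only [Finset.mem_insert, Finset.mem_image, Finset.mem_univ, true_and, not_or,
        EmbeddingLike.apply_eq_iff_eq, Sum.inl.injEq, reduceCtorEq, exists_false,
        not_false_eq_true, and_true]
      exact (zmod_add_one_ne i).symm

/-- A labelling is determined by its cycle up to permuting the private vertices of each edge. -/
lemma card_looseCycle_fiber_le :
    (Finset.univ.filter fun g' : LooseLabel r m ↪ Fin n => looseCycle g' = looseCycle g).card
      ≤ r.factorial ^ (m + 2) := by
  classical
  set A : ZMod (m + 2) → Finset (Fin n) := fun i => Finset.univ.image fun t => g (.inr (i, t))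
    with hA
  have hmem : ∀ g' : LooseLabel r m ↪ Fin n, looseCycle g' = looseCycle g →
      ∀ i t, g' (.inr (i, t)) ∈ A i := by
    intro g' hg' i t
    rw [hA]
    simp only
    rw [image_looseCycle_private, ← hg', ← image_looseCycle_private]
    exact Finset.mem_image_of_mem _ (Finset.mem_univ t)
  have hcard : Fintype.card (∀ i : ZMod (m + 2), Fin r ↪ A i) = r.factorial ^ (m + 2) := by
    have h1 : ∀ i, Fintype.card (Fin r ↪ A i) = r.factorial := fun i => by
      rw [Fintype.card_embedding_eq, Fintype.card_coe, card_looseCycle_private, Fintype.card_fin,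
        Nat.descFactorial_self]
    rw [Fintype.card_pi, Finset.prod_congr rfl fun i _ => h1 i, Finset.prod_const,
      Finset.card_univ, ZMod.card]
  rw [← hcard, ← Fintype.card_subtype]
  refine Fintype.card_le_of_injective
    (fun g' => fun i => ⟨fun t => ⟨g'.1 (.inr (i, t)), hmem g'.1 g'.2 i t⟩, ?_⟩) ?_
  · intro t t' h
    simpa using g'.1.injective (congrArg Subtype.val h)
  · rintro ⟨g₁, h₁⟩ ⟨g₂, h₂⟩ h
    refine Subtype.ext (DFunLike.ext _ _ fun l => ?_)
    rcases l with i | ⟨i, t⟩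
    · have := congr_fun (congrArg Prod.fst (h₁.trans h₂.symm)) i
      exact this
    · have h3 := DFunLike.congr_fun (congr_fun h i) t
      exact congrArg Subtype.val h3

/-- A loose cycle is determined by its support, its first vertex and its first edge. -/
lemma looseCycle_unique (hr : 1 ≤ r) {g g' : LooseLabel r m ↪ Fin n}
    (hF : Finset.univ.image (looseCycle g).2 = Finset.univ.image (looseCycle g').2)
    (hv : (looseCycle g).1 0 = (looseCycle g').1 0)
    (he : (looseCycle g).2 0 = (looseCycle g').2 0) : looseCycle g = looseCycle g' := by
  have B := isBergeCycle_looseCycle g hr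
  have B' := isBergeCycle_looseCycle g' hr
  have hi := @looseCycle_inter _ _ _ g
  have key : ∀ i, (looseCycle g).1 i = (looseCycle g').1 i
      ∧ (looseCycle g).2 i = (looseCycle g').2 i := by
    refine fun i => zmod_induction (P := fun i => (looseCycle g).1 i = (looseCycle g').1 i
      ∧ (looseCycle g).2 i = (looseCycle g').2 i) 0 ⟨hv, he⟩ ?_ i
    rintro i ⟨h1, h2⟩
    -- The next edge of `g'` is the edge `j` of `g`.
    obtain ⟨j, -, hj⟩ : ∃ j ∈ Finset.univ, (looseCycle g).2 j = (looseCycle g').2 (i + 1) := by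
      rw [← Finset.mem_image, hF]
      exact Finset.mem_image_of_mem _ (Finset.mem_univ _)
    have hji : j ≠ i := by
      rintro rfl
      rw [h2] at hj
      exact zmod_add_one_ne j (B'.e_inj hj).symm
    have hxi : (looseCycle g').1 (i + 1) ∈ (looseCycle g).2 i := h2 ▸ B'.mem_succ i
    have hxj : (looseCycle g').1 (i + 1) ∈ (looseCycle g).2 j := hj ▸ B'.mem (i + 1)
    have hx : (looseCycle g').1 (i + 1) = (looseCycle g).1 (i + 1) :=
      (hi hji.symm hxi hxj).resolve_left (h1 ▸ B'.v_ne i)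
    have hji' : j = i + 1 := by
      rcases hi hji hxj hxi with h | h
      · exact (B.v_inj (hx.symm.trans h)).symm
      · exact absurd (add_right_cancel (B.v_inj (hx.symm.trans h))).symm hji
    exact ⟨hx.symm, hji' ▸ hj⟩
  exact Prod.ext (funext fun i => (key i).1) (funext fun i => (key i).2)

lemma descFactorial_le_card_cycleSupports (hr : 1 ≤ r) :
    n.descFactorial ((r + 1) * (m + 2))
      ≤ r.factorial ^ (m + 2) * (2 * (m + 2) * (cycleSupports r n m).card) := by
  classical
  set N : Finset ((ZMod (m + 2) → Fin n) × (ZMod (m + 2) → Finset (Fin n))) :=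
    (Finset.univ : Finset (LooseLabel r m ↪ Fin n)).image looseCycle with hN
  have h1 : n.descFactorial ((r + 1) * (m + 2)) ≤ r.factorial ^ (m + 2) * N.card := by
    have hc : (Finset.univ : Finset (LooseLabel r m ↪ Fin n)).card
        = n.descFactorial ((r + 1) * (m + 2)) := by
      rw [Finset.card_univ, Fintype.card_embedding_eq, Fintype.card_sum, Fintype.card_prod,
        ZMod.card, Fintype.card_fin, Fintype.card_fin]
      congr 1
      ring
    rw [← hc]
    refine Finset.card_le_mul_card_image _ _ fun q hq => ?_
    obtain ⟨g, _, rfl⟩ := Finset.mem_image.1 hq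
    exact card_looseCycle_fiber_le g
  have h2 : N.card ≤ 2 * (m + 2) * (N.image fun q => Finset.univ.image q.2).card := by
    refine Finset.card_le_mul_card_image _ _ fun F hF => ?_
    obtain ⟨q, hq, rfl⟩ := Finset.mem_image.1 hF
    obtain ⟨g, _, rfl⟩ := Finset.mem_image.1 hq
    -- The first edge is one of the edges of `g`, the first vertex one of its two cycle vertices.
    set T : Finset (Fin n × Finset (Fin n)) :=
      (Finset.univ : Finset (ZMod (m + 2) × Bool)).image fun p =>
        (if p.2 then (looseCycle g).1 p.1 else (looseCycle g).1 (p.1 + 1), (looseCycle g).2 p.1)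
      with hT
    have hTc : T.card ≤ 2 * (m + 2) := by
      refine Finset.card_image_le.trans ?_
      rw [Finset.card_univ, Fintype.card_prod, ZMod.card, Fintype.card_bool, mul_comm]
    refine le_trans (Finset.card_le_card_of_injOn (fun q => (q.1 0, q.2 0)) ?_ ?_) hTc
    · intro q hq
      obtain ⟨hqN, hqF⟩ := Finset.mem_filter.1 hq
      obtain ⟨g', _, rfl⟩ := Finset.mem_image.1 hqN
      have B' := isBergeCycle_looseCycle g' hr
      have hedge : ∀ i, ∃ j, (looseCycle g).2 j = (looseCycle g').2 i := by
        intro i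
        have : (looseCycle g').2 i ∈ Finset.univ.image (looseCycle g).2 :=
          hqF ▸ Finset.mem_image_of_mem _ (Finset.mem_univ i)
        obtain ⟨j, _, hj⟩ := Finset.mem_image.1 this
        exact ⟨j, hj⟩
      obtain ⟨j, hj⟩ := hedge 0
      obtain ⟨j', hj'⟩ := hedge (-1)
      have hjj : j ≠ j' := by
        rintro rfl
        have := B'.e_inj (hj.symm.trans hj')
        refine zmod_add_one_ne (-1 : ZMod (m + 2)) ?_
        rw [neg_add_cancel]
        exact this
      have hx : (looseCycle g').1 0 ∈ (looseCycle g).2 j := hj ▸ B'.mem 0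
      have hx' : (looseCycle g').1 0 ∈ (looseCycle g).2 j' := by
        have := B'.mem_succ (-1)
        rw [neg_add_cancel] at this
        rwa [hj']
      rw [Finset.mem_coe, hT, Finset.mem_image]
      rcases looseCycle_inter g hjj hx hx' with h | h
      · exact ⟨(j, true), Finset.mem_univ _, Prod.ext h.symm hj⟩
      · exact ⟨(j, false), Finset.mem_univ _, Prod.ext h.symm hj⟩
    · intro q hq q' hq' hqq
      obtain ⟨hqN, hqF⟩ := Finset.mem_filter.1 hq
      obtain ⟨hqN', hqF'⟩ := Finset.mem_filter.1 hq'
      obtain ⟨g₁, _, rfl⟩ := Finset.mem_image.1 hqN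
      obtain ⟨g₂, _, rfl⟩ := Finset.mem_image.1 hqN'
      exact looseCycle_unique hr (hqF.trans hqF'.symm) (congrArg Prod.fst hqq)
        (congrArg Prod.snd hqq)
  have h3 : (N.image fun q => Finset.univ.image q.2) ⊆ cycleSupports r n m := by
    refine Finset.image_subset_image fun q hq => ?_
    obtain ⟨g, _, rfl⟩ := Finset.mem_image.1 hq
    exact mem_cycleSeqs.2 (isBergeCycle_looseCycle g hr)
  calc _ ≤ _ := h1
    _ ≤ _ := Nat.mul_le_mul_left _ (h2.trans (Nat.mul_le_mul_left _ (Finset.card_le_card h3)))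

end Loose

/-! ### Overlapping pairs of cycles -/

/-- The edge sets of Berge cycles of length less than `K + 2`. -/
noncomputable def shortCycles (r n K : ℕ) : Finset (Finset (Finset (Fin n))) :=
  (Finset.range K).biUnion fun m => cycleSupports r n m

lemma mem_shortCycles {r n K : ℕ} {S : Finset (Finset (Fin n))} :
    S ∈ shortCycles r n K ↔ ∃ m < K, S ∈ cycleSupports r n m := by
  simp [shortCycles]

lemma card_of_mem_cycleSupports {r n m : ℕ} {S : Finset (Finset (Fin n))}
    (hS : S ∈ cycleSupports r n m) : S.card = m + 2 := by
  obtain ⟨v, e, h, rfl⟩ := mem_cycleSupports.1 hS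
  exact h.card_support

lemma shortCycles_subset {r n K : ℕ} {S : Finset (Finset (Fin n))} (hS : S ∈ shortCycles r n K) :
    S ⊆ Finset.powersetCard (r + 2) Finset.univ ∧ S.Nonempty := by
  obtain ⟨m, _, hS⟩ := mem_shortCycles.1 hS
  obtain ⟨v, e, h, rfl⟩ := mem_cycleSupports.1 hS
  refine ⟨fun s hs => ?_, Finset.univ_nonempty.image e⟩
  obtain ⟨i, _, rfl⟩ := Finset.mem_image.1 hs
  exact Finset.mem_powersetCard.2 ⟨Finset.subset_univ _, h.card_e i⟩

lemma sum_shortCycles (r n K : ℕ) (p : ℝ) : ∑ S ∈ shortCycles r n K, p ^ S.card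
    = ∑ m ∈ Finset.range K, ((cycleSupports r n m).card : ℝ) * p ^ (m + 2) := by
  unfold shortCycles
  rw [Finset.sum_biUnion]
  · refine Finset.sum_congr rfl fun m _ => ?_
    rw [Finset.sum_congr rfl fun S hS => by rw [card_of_mem_cycleSupports hS], Finset.sum_const,
      nsmul_eq_mul]
  · intro m _ m' _ hmm
    refine Finset.disjoint_left.2 fun S hS hS' => hmm ?_
    have := (card_of_mem_cycleSupports hS).symm.trans (card_of_mem_cycleSupports hS')
    omega

/-- The union of two distinct overlapping cycles has positive excess. -/
lemma card_verts_union_succ_le {r n K : ℕ} {S T : Finset (Finset (Fin n))}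
    (hS : S ∈ shortCycles r n K) (hT : T ∈ shortCycles r n K) (hne : T ≠ S)
    (hd : ¬ Disjoint S T) :
    ((S ∪ T).biUnion id).card + 1 ≤ (r + 1) * (S ∪ T).card := by
  wlog hTS : ¬ T ⊆ S generalizing S T
  · push Not at hTS
    rw [Finset.union_comm]
    exact this hT hS hne.symm (fun h => hd h.symm) fun h => hne (hTS.antisymm h)
  obtain ⟨m, _, hS⟩ := mem_shortCycles.1 hS
  obtain ⟨m', _, hT⟩ := mem_shortCycles.1 hT
  obtain ⟨v, e, h, rfl⟩ := mem_cycleSupports.1 hS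
  obtain ⟨v', e', h', rfl⟩ := mem_cycleSupports.1 hT
  obtain ⟨_, hs, hs'⟩ := Finset.not_disjoint_iff.1 hd
  obtain ⟨i₀, _, rfl⟩ := Finset.mem_image.1 hs'
  obtain ⟨_, ht, ht'⟩ := Finset.not_subset.1 hTS
  obtain ⟨i₁, _, rfl⟩ := Finset.mem_image.1 ht
  have h1 := h'.card_verts_union_lt hs ht'
  have h2 := h.card_verts_le
  rw [← Finset.union_sdiff_self_eq_union (s := Finset.univ.image e),
    Finset.card_union_of_disjoint Finset.disjoint_sdiff, mul_add, h.card_support,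
    Finset.union_sdiff_self_eq_union]
  omega

/-- A family of pairs of edge sets that each span at most `q` vertices has `O(n ^ q)` members. -/
lemma card_pairs_le (n q : ℕ) (P : Finset (Finset (Finset (Fin n)) × Finset (Finset (Fin n))))
    (hP : ∀ z ∈ P, ((z.1 ∪ z.2).biUnion id).Nonempty ∧ ((z.1 ∪ z.2).biUnion id).card ≤ q) :
    P.card ≤ n ^ q * Fintype.card (Finset (Finset (Fin q)) × Finset (Finset (Fin q))) := by
  have hcard : Fintype.card ((Fin q → Fin n) × (Finset (Finset (Fin q)) × Finset (Finset (Fin q))))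
      = n ^ q * Fintype.card (Finset (Finset (Fin q)) × Finset (Finset (Fin q))) := by
    rw [Fintype.card_prod, Fintype.card_fun, Fintype.card_fin, Fintype.card_fin]
  rw [← hcard, ← Finset.card_univ]
  refine le_trans (Finset.card_le_card (t := Finset.univ.image fun
    w : (Fin q → Fin n) × (Finset (Finset (Fin q)) × Finset (Finset (Fin q))) =>
      (w.2.1.image (Finset.image w.1), w.2.2.image (Finset.image w.1))) ?_) Finset.card_image_le
  rintro ⟨S, T⟩ hz
  obtain ⟨⟨x₀, hx₀⟩, hle⟩ := hP _ hz
  set W := (S ∪ T).biUnion id with hW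
  -- A (not necessarily injective) enumeration of the spanned vertices by `Fin q`.
  obtain ⟨g, hg⟩ : ∃ g : Fin q → Fin n, ∀ x ∈ W, ∃ i, g i = x := by
    refine ⟨fun i => if h : i.1 < W.card then (W.equivFin.symm ⟨i.1, h⟩).1 else x₀,
      fun x hx => ?_⟩
    set i := W.equivFin ⟨x, hx⟩ with hi
    refine ⟨⟨i.1, i.2.trans_le hle⟩, ?_⟩
    simp [hi]
  have hpull : ∀ s, (∀ x ∈ s, x ∈ W) → (Finset.univ.filter fun i => g i ∈ s).image g = s := by
    intro s hs
    ext x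
    simp only [Finset.mem_image, Finset.mem_filter, Finset.mem_univ, true_and]
    constructor
    · rintro ⟨i, hi, rfl⟩; exact hi
    · intro hx
      obtain ⟨i, rfl⟩ := hg x (hs x hx)
      exact ⟨i, hx, rfl⟩
  have hpull2 : ∀ R, R ⊆ S ∪ T →
      (R.image fun s => Finset.univ.filter fun i => g i ∈ s).image (Finset.image g) = R := by
    intro R hR
    rw [Finset.image_image]
    conv_rhs => rw [← Finset.image_id (s := R)]
    refine Finset.image_congr fun s hs => hpull s fun x hx => ?_
    exact Finset.mem_biUnion.2 ⟨s, hR hs, hx⟩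
  refine Finset.mem_image.2 ⟨(g, _, _), Finset.mem_univ _,
    Prod.ext (hpull2 S Finset.subset_union_left) (hpull2 T Finset.subset_union_right)⟩

/-- For bounded cycle length, the expected number of overlapping pairs of cycles is `O(1 / n)`. -/
lemma exists_overlap_le (r K : ℕ) {c : ℝ} (hc : 0 ≤ c) : ∃ C : ℝ, ∀ (n : ℕ) (p : ℝ), 0 < n →
    0 ≤ p → p ≤ c / (n : ℝ) ^ (r + 1) →
    ∑ S ∈ shortCycles r n K, ∑ T ∈ shortCycles r n K with T ≠ S ∧ ¬ Disjoint S T,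
      p ^ (S ∪ T).card ≤ C / n := by
  set D : ℕ → ℝ := fun M => (Fintype.card (Finset (Finset (Fin ((r + 1) * M - 1))) ×
    Finset (Finset (Fin ((r + 1) * M - 1)))) : ℝ) * c ^ M with hD
  refine ⟨∑ M ∈ Finset.range (2 * K + 3), D M, fun n p hn hp hpc => ?_⟩
  have hn' : (0 : ℝ) < n := by exact_mod_cast hn
  simp_rw [Finset.sum_filter]
  rw [← Finset.sum_product', ← Finset.sum_filter]
  set P := (shortCycles r n K ×ˢ shortCycles r n K).filter
    fun z => z.2 ≠ z.1 ∧ ¬ Disjoint z.1 z.2 with hP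
  have hPm : ∀ z ∈ P, z.1 ∈ shortCycles r n K ∧ z.2 ∈ shortCycles r n K ∧ z.2 ≠ z.1 ∧
      ¬ Disjoint z.1 z.2 := by
    intro z hz
    rw [hP, Finset.mem_filter, Finset.mem_product] at hz
    exact ⟨hz.1.1, hz.1.2, hz.2⟩
  have hmaps : ∀ z ∈ P, (z.1 ∪ z.2).card ∈ Finset.range (2 * K + 3) := by
    intro z hz
    obtain ⟨h1, h2, -⟩ := hPm z hz
    obtain ⟨m, hm, h1⟩ := mem_shortCycles.1 h1
    obtain ⟨m', hm', h2⟩ := mem_shortCycles.1 h2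
    have h3 := Finset.card_union_le z.1 z.2
    rw [card_of_mem_cycleSupports h1, card_of_mem_cycleSupports h2] at h3
    rw [Finset.mem_range]
    omega
  rw [← Finset.sum_fiberwise_of_maps_to hmaps, Finset.sum_div]
  refine Finset.sum_le_sum fun M _ => ?_
  set Q := P.filter fun z => (z.1 ∪ z.2).card = M with hQ
  rw [Finset.sum_congr rfl fun z hz => by rw [(Finset.mem_filter.1 hz).2], Finset.sum_const,
    nsmul_eq_mul]
  rcases Q.eq_empty_or_nonempty with h0 | ⟨z₀, hz₀⟩
  · rw [h0, Finset.card_empty, Nat.cast_zero, zero_mul]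
    simp only [hD]
    positivity
  have hexc : ∀ z ∈ Q, ((z.1 ∪ z.2).biUnion id).card + 1 ≤ (r + 1) * M := by
    intro z hz
    obtain ⟨hzP, hzM⟩ := Finset.mem_filter.1 hz
    obtain ⟨h1, h2, h3, h4⟩ := hPm z hzP
    rw [← hzM]
    exact card_verts_union_succ_le h1 h2 h3 h4
  have hQc : Q.card ≤ n ^ ((r + 1) * M - 1) * Fintype.card
      (Finset (Finset (Fin ((r + 1) * M - 1))) × Finset (Finset (Fin ((r + 1) * M - 1)))) := by
    refine card_pairs_le _ _ _ fun z hz => ⟨?_, by have := hexc z hz; omega⟩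
    obtain ⟨h1, -⟩ := hPm z (Finset.mem_filter.1 hz).1
    obtain ⟨hsub, s, hs⟩ := shortCycles_subset h1
    have hsc := (Finset.mem_powersetCard.1 (hsub hs)).2
    obtain ⟨x, hx⟩ : s.Nonempty := Finset.card_pos.1 (by omega)
    exact ⟨x, Finset.mem_biUnion.2 ⟨s, Finset.mem_union_left _ hs, hx⟩⟩
  have hM : (r + 1) * M - 1 + 1 = (r + 1) * M := by have := hexc z₀ hz₀; omega
  have hpow : (n : ℝ) ^ ((r + 1) * M - 1) * p ^ M ≤ c ^ M / n := by
    have h1 : p ^ M ≤ (c / (n : ℝ) ^ (r + 1)) ^ M := pow_le_pow_left₀ hp hpc M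
    rw [div_pow, ← pow_mul, ← hM] at h1
    calc (n : ℝ) ^ ((r + 1) * M - 1) * p ^ M
        ≤ (n : ℝ) ^ ((r + 1) * M - 1) * (c ^ M / (n : ℝ) ^ ((r + 1) * M - 1 + 1)) :=
          mul_le_mul_of_nonneg_left h1 (by positivity)
      _ = c ^ M / n := by
          rw [pow_succ]
          field_simp
  calc (Q.card : ℝ) * p ^ M
      ≤ ((n ^ ((r + 1) * M - 1) * Fintype.card (Finset (Finset (Fin ((r + 1) * M - 1))) ×
          Finset (Finset (Fin ((r + 1) * M - 1)))) : ℕ) : ℝ) * p ^ M :=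
        mul_le_mul_of_nonneg_right (by exact_mod_cast hQc) (by positivity)
    _ = (Fintype.card (Finset (Finset (Fin ((r + 1) * M - 1))) ×
          Finset (Finset (Fin ((r + 1) * M - 1)))) : ℝ) *
          ((n : ℝ) ^ ((r + 1) * M - 1) * p ^ M) := by
        rw [Nat.cast_mul, Nat.cast_pow]; ring
    _ ≤ _ := mul_le_mul_of_nonneg_left hpow (Nat.cast_nonneg _)
    _ = D M / n := by simp only [hD]; ring

/-! ### Asymptotics -/

lemma hProb_hyperAcyclic (r n : ℕ) (p : ℝ) :
    hProb (r + 2) n p (fun H => hyperAcyclic H)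
      = avoidProb (Finset.powersetCard (r + 2) (Finset.univ : Finset (Fin n))) p
          (shortCycles r n n) := by
  classical
  have hiff : ∀ H : HyperGraph (r + 2) n,
      hyperAcyclic H ↔ ∀ S ∈ shortCycles r n n, ¬ S ⊆ H.1 := by
    intro H
    rw [hyperAcyclic_iff]
    constructor
    · intro h S hS
      obtain ⟨m, _, hS⟩ := mem_shortCycles.1 hS
      obtain ⟨v, e, hc, rfl⟩ := mem_cycleSupports.1 hS
      exact h m v e hc
    · intro h m v e hc
      have hm := Fintype.card_le_of_injective v hc.v_inj
      rw [ZMod.card, Fintype.card_fin] at hm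
      exact h _ (mem_shortCycles.2 ⟨m, by omega, mem_cycleSupports.2 ⟨v, e, hc, rfl⟩⟩)
  have : Finite (HyperGraph (r + 2) n) := by unfold HyperGraph; infer_instance
  have : Fintype (HyperGraph (r + 2) n) := Fintype.ofFinite _
  rw [hProb, finsum_eq_sum_of_fintype, avoidProb, bexp]
  refine Finset.sum_bij (fun H _ => H.1) (fun H _ => ?_) (fun H _ H' _ h => Subtype.ext h)
    (fun E hE => ?_) (fun H _ => ?_)
  · exact Finset.mem_powerset.2 fun s hs =>
      Finset.mem_powersetCard.2 ⟨Finset.subset_univ _, H.2 s hs⟩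
  · exact ⟨⟨E, fun s hs => (Finset.mem_powersetCard.1 (Finset.mem_powerset.1 hE hs)).2⟩,
      Finset.mem_univ _, rfl⟩
  · rw [Finset.card_powersetCard, Finset.card_univ, Fintype.card_fin, ← hWeight]
    by_cases h : hyperAcyclic H
    · rw [if_pos h, avoidInd, if_pos ((hiff H).1 h), mul_one]
    · rw [if_neg h, avoidInd, if_neg (fun h' => h ((hiff H).2 h')), mul_zero]

/-- The limiting expected number of cycles, summed over all lengths. -/
lemma hasSum_cycle_mean {x : ℝ} (h0 : 0 < x) (h1 : x < 1) :
    HasSum (fun m : ℕ => x ^ (m + 2) / (2 * (m + 2))) ((-Real.log (1 - x) - x) / 2) := by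
  have h := Real.hasSum_pow_div_log_of_abs_lt_one (x := x) (by rwa [abs_of_pos h0])
  have h2 := ((hasSum_nat_add_iff' 1).2 h).div_const 2
  simp only [Finset.range_one, Finset.sum_singleton, Nat.cast_zero, zero_add, pow_one,
    div_one] at h2
  have h3 : (fun m : ℕ => x ^ (m + 2) / (2 * ((m : ℝ) + 2)))
      = fun m : ℕ => x ^ (m + 1 + 1) / (((m + 1 : ℕ) : ℝ) + 1) / 2 := by
    funext m
    push_cast
    rw [show m + 1 + 1 = m + 2 by ring, show (m : ℝ) + 1 + 1 = m + 2 by ring, div_div, mul_comm 2]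
  rw [h3]
  exact h2

lemma card_cycleSupports_mul_pow_le {r n : ℕ} (m : ℕ) {c p : ℝ} (hn : 0 < n) (hp : 0 ≤ p)
    (hpc : p ≤ c / (n : ℝ) ^ (r + 1)) :
    ((cycleSupports r n m).card : ℝ) * p ^ (m + 2)
      ≤ (c / r.factorial) ^ (m + 2) / (2 * (m + 2)) := by
  have hn' : (0 : ℝ) < n := by exact_mod_cast hn
  have h1 : (2 * (m + 2) : ℝ) * (cycleSupports r n m).card ≤ ((n : ℝ) * n.choose r) ^ (m + 2) := by
    exact_mod_cast (mul_card_cycleSupports_le r n m).trans (card_cycleSeqs_le r n m)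
  have h2 : (n : ℝ) * n.choose r * p ≤ c / r.factorial := by
    have h3 : (n.choose r : ℝ) ≤ (n : ℝ) ^ r / r.factorial := Nat.choose_le_pow_div r n
    have hf : (0 : ℝ) < r.factorial := by exact_mod_cast r.factorial_pos
    calc (n : ℝ) * n.choose r * p
        ≤ n * ((n : ℝ) ^ r / r.factorial) * (c / (n : ℝ) ^ (r + 1)) := by gcongr
      _ = c / r.factorial := by rw [pow_succ]; field_simp
  rw [le_div_iff₀ (by positivity)]
  calc _ = (2 * (m + 2) : ℝ) * (cycleSupports r n m).card * p ^ (m + 2) := by ring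
    _ ≤ ((n : ℝ) * n.choose r) ^ (m + 2) * p ^ (m + 2) := by gcongr
    _ = ((n : ℝ) * n.choose r * p) ^ (m + 2) := (mul_pow _ _ _).symm
    _ ≤ _ := pow_le_pow_left₀ (by positivity) h2 _

lemma le_card_cycleSupports_mul_pow {r n : ℕ} (hr : 1 ≤ r) (m : ℕ) {c : ℝ} (hc : 0 ≤ c) :
    (c / r.factorial) ^ (m + 2) / (2 * (m + 2)) *
        ((n.descFactorial ((r + 1) * (m + 2)) : ℝ) / (n : ℝ) ^ ((r + 1) * (m + 2)))
      ≤ ((cycleSupports r n m).card : ℝ) * (c / (n : ℝ) ^ (r + 1)) ^ (m + 2) := by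
  have hf : (0 : ℝ) < r.factorial := by exact_mod_cast r.factorial_pos
  have h1 : (n.descFactorial ((r + 1) * (m + 2)) : ℝ) ≤
      (r.factorial : ℝ) ^ (m + 2) * (2 * (m + 2) * (cycleSupports r n m).card) := by
    exact_mod_cast descFactorial_le_card_cycleSupports (n := n) (m := m) hr
  rw [div_pow, div_pow, ← pow_mul]
  calc _ ≤ c ^ (m + 2) / (r.factorial : ℝ) ^ (m + 2) / (2 * (m + 2)) *
        (((r.factorial : ℝ) ^ (m + 2) * (2 * (m + 2) * (cycleSupports r n m).card)) /
          (n : ℝ) ^ ((r + 1) * (m + 2))) := by gcongr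
    _ = _ := by field_simp

lemma tendsto_descFactorial_div_pow (q : ℕ) :
    Tendsto (fun n : ℕ => (n.descFactorial q : ℝ) / (n : ℝ) ^ q) atTop (𝓝 1) := by
  have hlow : Tendsto (fun n : ℕ => (1 - (q : ℝ) / n) ^ q) atTop (𝓝 1) := by
    have := ((tendsto_const_nhds (x := (1 : ℝ))).sub
      (tendsto_const_div_atTop_nhds_zero_nat (q : ℝ))).pow q
    simpa using this
  refine tendsto_of_tendsto_of_tendsto_of_le_of_le' hlow tendsto_const_nhds ?_ ?_
  · filter_upwards [eventually_gt_atTop 0, eventually_ge_atTop q] with n hn hq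
    have hn' : (0 : ℝ) < n := by exact_mod_cast hn
    have h1 : ((n - q : ℕ) : ℝ) ^ q ≤ n.descFactorial q := by
      exact_mod_cast (Nat.pow_le_pow_left (by omega) q).trans (Nat.pow_sub_le_descFactorial n q)
    rw [Nat.cast_sub hq] at h1
    rw [le_div_iff₀ (by positivity), ← mul_pow, sub_mul, one_mul, div_mul_cancel₀ _ hn'.ne']
    exact h1
  · filter_upwards [eventually_gt_atTop 0] with n hn
    have hn' : (0 : ℝ) < n := by exact_mod_cast hn
    rw [div_le_one (by positivity)]
    exact_mod_cast Nat.descFactorial_le_pow n q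

/-- For `d ≥ 3` and `0 < c < (d-2)!`, the probability that `G^d(n, c/n^{d-1})` is acyclic
converges to `e^{-f_d(c)} = e^{c/(2(d-2)!)}·√(1 - c/(d-2)!)`. -/
theorem tendsto_hProb_acyclic (d : ℕ) (hd : 3 ≤ d) (c : ℝ) (hc0 : 0 < c)
    (hc1 : c < (Nat.factorial (d - 2) : ℝ)) :
    Tendsto
      (fun n : ℕ => hProb d n (min 1 (c / (n : ℝ) ^ (d - 1))) (fun H => hyperAcyclic H))
      atTop
      (𝓝 (Real.exp (c / (2 * (Nat.factorial (d - 2) : ℝ))) *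
        Real.sqrt (1 - c / (Nat.factorial (d - 2) : ℝ)))) := by
  obtain ⟨r, rfl⟩ : ∃ r, d = r + 2 := ⟨d - 2, by omega⟩
  have hr : 1 ≤ r := by omega
  simp only [Nat.add_sub_cancel, show r + 2 - 1 = r + 1 from rfl] at hc1 ⊢
  have hf : (0 : ℝ) < r.factorial := by exact_mod_cast r.factorial_pos
  set x : ℝ := c / r.factorial with hx
  have hx0 : 0 < x := by positivity
  have hx1 : x < 1 := (div_lt_one hf).2 hc1
  set L : ℝ := (-Real.log (1 - x) - x) / 2 with hL
  have hlim : Real.exp (c / (2 * (r.factorial : ℝ))) * Real.sqrt (1 - x) = Real.exp (-L) := by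
    rw [Real.sqrt_eq_rpow, Real.rpow_def_of_pos (by linarith), ← Real.exp_add]
    congr 1
    rw [hL, show c / (2 * (r.factorial : ℝ)) = x / 2 by rw [hx]; field_simp]
    ring
  rw [hlim]
  have hsum := hasSum_cycle_mean hx0 hx1
  have hp0 : Tendsto (fun n : ℕ => c / (n : ℝ) ^ (r + 1)) atTop (𝓝 0) :=
    tendsto_const_nhds.div_atTop
      ((tendsto_pow_atTop (by omega)).comp tendsto_natCast_atTop_atTop)
  have hp1 : ∀ᶠ n : ℕ in atTop, c / (n : ℝ) ^ (r + 1) < 1 := hp0.eventually (gt_mem_nhds one_pos)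
  have hnn : ∀ n : ℕ, 0 ≤ c / (n : ℝ) ^ (r + 1) := fun n => by positivity
  refine tendsto_order.2 ⟨fun a ha => ?_, fun b hb => ?_⟩
  · have hT : Tendsto (fun n : ℕ => Real.exp (-L / (1 - c / (n : ℝ) ^ (r + 1)))) atTop
        (𝓝 (Real.exp (-L))) := by
      refine (Real.continuous_exp.tendsto _).comp ?_
      have := (tendsto_const_nhds (x := -L)).div ((tendsto_const_nhds (x := (1 : ℝ))).sub hp0)
        (by norm_num)
      simpa [Pi.div_def] using this
    filter_upwards [hT.eventually (lt_mem_nhds ha), hp1, eventually_gt_atTop 0] with n hn hn1 hpos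
    refine hn.trans_le ?_
    rw [min_eq_right hn1.le, hProb_hyperAcyclic]
    refine le_trans (Real.exp_le_exp.2 ?_)
      (exp_le_avoidProb (hnn n) hn1 _ fun S hS => shortCycles_subset hS)
    rw [sum_shortCycles]
    have h1 : ∑ m ∈ Finset.range n, ((cycleSupports r n m).card : ℝ) *
        (c / (n : ℝ) ^ (r + 1)) ^ (m + 2) ≤ L :=
      (Finset.sum_le_sum fun m _ => card_cycleSupports_mul_pow_le m hpos (hnn n) le_rfl).trans
        (sum_le_hasSum _ (fun m _ => by positivity) hsum)
    have h2 : 0 < 1 - c / (n : ℝ) ^ (r + 1) := by linarith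
    gcongr
  · -- Truncating at a large fixed length `K` loses little in the expected number of cycles.
    obtain ⟨K, hK⟩ : ∃ K, Real.exp (-∑ m ∈ Finset.range K, x ^ (m + 2) / (2 * (m + 2))) < b := by
      have := (Real.continuous_exp.tendsto (-L)).comp hsum.tendsto_sum_nat.neg
      exact (this.eventually (gt_mem_nhds hb)).exists
    obtain ⟨C, hC⟩ := exists_overlap_le r K hc0.le
    have hT : Tendsto (fun n : ℕ => Real.exp (-∑ m ∈ Finset.range K, x ^ (m + 2) / (2 * (m + 2)) *
        ((n.descFactorial ((r + 1) * (m + 2)) : ℝ) / (n : ℝ) ^ ((r + 1) * (m + 2))) + C / n)) atTop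
        (𝓝 (Real.exp (-∑ m ∈ Finset.range K, x ^ (m + 2) / (2 * (m + 2))))) := by
      refine (Real.continuous_exp.tendsto _).comp ?_
      have h1 := (tendsto_finsetSum (Finset.range K) fun m _ =>
        (tendsto_descFactorial_div_pow ((r + 1) * (m + 2))).const_mul
          (x ^ (m + 2) / (2 * ((m : ℝ) + 2)))).neg.add (tendsto_const_div_atTop_nhds_zero_nat C)
      simpa only [mul_one, add_zero] using h1
    filter_upwards [hT.eventually (gt_mem_nhds hK), hp1, eventually_gt_atTop 0,
      eventually_ge_atTop K] with n hn hn1 hpos hKn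
    refine lt_of_le_of_lt ?_ hn
    rw [min_eq_right hn1.le, hProb_hyperAcyclic]
    have hmono : shortCycles r n K ⊆ shortCycles r n n := fun S hS => by
      obtain ⟨m, hm, hS⟩ := mem_shortCycles.1 hS
      exact mem_shortCycles.2 ⟨m, by omega, hS⟩
    refine (avoidProb_anti _ (hnn n) hn1.le hmono).trans
      ((avoidProb_le_exp (hnn n) hn1.le _ fun S hS => (shortCycles_subset hS).1).trans
        (Real.exp_le_exp.2 (add_le_add (neg_le_neg ?_) (hC n _ hpos (hnn n) le_rfl))))
    rw [sum_shortCycles]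
    exact Finset.sum_le_sum fun m _ => le_card_cycleSupports_mul_pow hr m hc0.le
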